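/- Let $X_n \sim \mathrm{Bin}(n,p)$ with $n$ a positive integer and $p \in (0,1)$. Then for every positive integer $k$ with $np < k \le n$, one has $\frac{\mathbb{P}[X_n \ge k+1]}{\mathbb{P}[X_n \ge k]} \le \frac{p(n-k)}{k(1-p)}$. -/

import Mathlib

/-- The binomial probability mass function: `P[Bin(n,p) = i] = C(n,i) p^i (1-p)^(n-i)`. -/
noncomputable def binPMF (n : ℕ) (p : ℝ) (i : ℕ) : ℝ :=
  (n.choose i : ℝ) * p ^ i * (1 - p) ^ (n - i)

/-- The binomial tail probability `P[Bin(n,p) ≥ k]`. -/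
noncomputable def binTail (n : ℕ) (p : ℝ) (k : ℕ) : ℝ :=
  ∑ i ∈ Finset.Icc k n, binPMF n p i

/-- The tail conditional expectation `E[Bin(n,p) | Bin(n,p) ≥ k]`,
i.e. `E[X · 1_{X ≥ k}] / P[X ≥ k]`. -/
noncomputable def binTCE (n : ℕ) (p : ℝ) (k : ℕ) : ℝ :=
  (∑ i ∈ Finset.Icc k n, (i : ℝ) * binPMF n p i) / binTail n p k

/-!
The ratio of consecutive weights, `P[X = i + 1] / P[X = i] = p (n - i) / ((i + 1) (1 - p))`,
decreases in `i`, so for `i ≥ k` it is at most its value at `i = k`. Summing `P[X = i + 1]` over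
`i ≥ k` bounds the ratio of tails by `p (n - k) / ((k + 1) (1 - p))`.
-/

section BinomialTail

variable {n k i : ℕ} {p : ℝ}

lemma binPMF_eq_zero_of_lt (hni : n < i) : binPMF n p i = 0 := by
  simp [binPMF, Nat.choose_eq_zero_of_lt hni]

lemma binPMF_nonneg (hp : 0 ≤ p) (hp1 : p ≤ 1) : 0 ≤ binPMF n p i := by
  have : 0 ≤ 1 - p := sub_nonneg.2 hp1
  unfold binPMF
  positivity

lemma binPMF_pos (hp : 0 < p) (hp1 : p < 1) (hin : i ≤ n) : 0 < binPMF n p i := by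
  have : 0 < 1 - p := sub_pos.2 hp1
  have : 0 < n.choose i := Nat.choose_pos hin
  unfold binPMF
  positivity

lemma binTail_pos (hp : 0 < p) (hp1 : p < 1) (hkn : k ≤ n) : 0 < binTail n p k :=
  Finset.sum_pos (fun _ hi => binPMF_pos hp hp1 (Finset.mem_Icc.1 hi).2)
    (Finset.nonempty_Icc.2 hkn)

lemma succ_mul_one_sub_mul_binPMF_succ (n : ℕ) (p : ℝ) (i : ℕ) :
    ((i : ℝ) + 1) * (1 - p) * binPMF n p (i + 1) = p * ((n : ℝ) - i) * binPMF n p i := by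
  rcases lt_trichotomy i n with hlt | rfl | hgt
  · have hchoose : (n.choose (i + 1) : ℝ) * ((i : ℝ) + 1) = n.choose i * ((n : ℝ) - i) := by
      rw [← Nat.cast_sub hlt.le]
      exact_mod_cast Nat.choose_succ_right_eq n i
    have hexp : n - i = n - (i + 1) + 1 := by omega
    rw [binPMF, binPMF, hexp]
    linear_combination p ^ (i + 1) * (1 - p) ^ (n - (i + 1) + 1) * hchoose
  · rw [binPMF_eq_zero_of_lt i.lt_succ_self, sub_self, mul_zero, mul_zero, zero_mul]
  · rw [binPMF_eq_zero_of_lt hgt, binPMF_eq_zero_of_lt (hgt.trans i.lt_succ_self),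
      mul_zero, mul_zero]

lemma binPMF_succ_le (hp : 0 ≤ p) (hp1 : p < 1) (hki : k ≤ i) :
    binPMF n p (i + 1) ≤ p * ((n : ℝ) - k) / (((k : ℝ) + 1) * (1 - p)) * binPMF n p i := by
  have : 0 < 1 - p := sub_pos.2 hp1
  have hpmf (j : ℕ) : 0 ≤ binPMF n p j := binPMF_nonneg hp hp1.le
  rw [div_mul_eq_mul_div, le_div_iff₀' (by positivity)]
  calc ((k : ℝ) + 1) * (1 - p) * binPMF n p (i + 1)
      ≤ ((i : ℝ) + 1) * (1 - p) * binPMF n p (i + 1) := by gcongr; exact hpmf _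
    _ = p * ((n : ℝ) - i) * binPMF n p i := succ_mul_one_sub_mul_binPMF_succ n p i
    _ ≤ p * ((n : ℝ) - k) * binPMF n p i := by gcongr; exact hpmf _

lemma binTail_succ (n : ℕ) (p : ℝ) (k : ℕ) :
    binTail n p (k + 1) = ∑ i ∈ Finset.Icc k n, binPMF n p (i + 1) := by
  calc binTail n p (k + 1) = ∑ i ∈ Finset.Icc (k + 1) (n + 1), binPMF n p i := by
        refine Finset.sum_subset (Finset.Icc_subset_Icc_right n.le_succ) fun i hi hi' => ?_
        simp only [Finset.mem_Icc] at hi hi'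
        exact binPMF_eq_zero_of_lt (by omega)
    _ = ∑ i ∈ Finset.Icc k n, binPMF n p (i + 1) := by
        simp only [← Finset.map_add_right_Icc k n 1, Finset.sum_map, addRightEmbedding_apply]

lemma binTail_succ_le (hp : 0 ≤ p) (hp1 : p < 1) :
    binTail n p (k + 1) ≤ p * ((n : ℝ) - k) / (((k : ℝ) + 1) * (1 - p)) * binTail n p k := by
  rw [binTail_succ, binTail, Finset.mul_sum]
  exact Finset.sum_le_sum fun _ hi => binPMF_succ_le hp hp1 (Finset.mem_Icc.1 hi).1

theorem binomial_tail_ratio_bound_general (hp : 0 < p) (hp1 : p < 1) (hkn : k ≤ n) :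
    binTail n p (k + 1) / binTail n p k ≤ p * ((n : ℝ) - k) / (((k : ℝ) + 1) * (1 - p)) :=
  (div_le_iff₀ (binTail_pos hp hp1 hkn)).2 (binTail_succ_le hp.le hp1)

end BinomialTail

theorem binomial_tail_ratio_bound
    (n k : ℕ) (p : ℝ) (hn : 0 < n) (hp : 0 < p) (hp1 : p < 1)
    (hk : 0 < k) (hlow : (n : ℝ) * p < k) (hkn : k ≤ n) :
    binTail n p (k + 1) / binTail n p k ≤ p * ((n : ℝ) - k) / ((k : ℝ) * (1 - p)) := by
  have : (0 : ℝ) ≤ n - k := sub_nonneg.2 (Nat.cast_le.2 hkn)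
  have : 0 < 1 - p := sub_pos.2 hp1
  exact (binomial_tail_ratio_bound_general hp hp1 hkn).trans (by gcongr; linarith)
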